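/- Let n ≥ 2 and let m = 2m₀ be even with m₀ ≥ 1. Let H be a Hankel tensor of order m and dimension n with parameter vector h ∈ ℂ^{d+1}, d = (n−1)m, let s = d/2 = (n−1)m₀, and let r = rank C_{d−s,s}(h). Suppose either r = s+1, or r < s+1 and there exists a nonzero f = (f_0,…,f_r) ∈ ker C_{d−r,r}(h) whose binary form f(x,y) = f_0 x^r + ⋯ + f_r y^r is squarefree as a homogeneous polynomial in ℂ[x,y]. Then rank_V(H) = rank_S(H) = rank(H) = brank_V(H) = brank_S(H) = brank(H) = r. -/

import Mathlib

open scoped BigOperators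
open MvPolynomial

noncomputable section

/-- An order-`m`, dimension-`n` complex tensor. -/
abbrev Tensor (m n : ℕ) := (Fin m → Fin n) → ℂ

/-- Tensors expressible as a sum of `r` rank-one tensors. -/
def cpSet (m n r : ℕ) : Set (Tensor m n) :=
  {T | ∃ u : Fin r → Fin m → Fin n → ℂ, ∀ i, T i = ∑ k, ∏ j, u k j (i j)}

/-- Tensors expressible as a sum of `r` symmetric rank-one tensors. -/
def symSet (m n r : ℕ) : Set (Tensor m n) :=
  {T | ∃ v : Fin r → Fin n → ℂ, ∀ i, T i = ∑ k, ∏ j, v k (i j)}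

/-- The Vandermonde vector `v(a,b) ∈ ℂ^n`, `v(a,b)_i = a^(n-1-i) * b^i`. -/
def vand (n : ℕ) (a b : ℂ) : Fin n → ℂ := fun i => a ^ (n - 1 - (i : ℕ)) * b ^ (i : ℕ)

/-- Tensors expressible as a sum of `r` Vandermonde rank-one tensors. -/
def vandSet (m n r : ℕ) : Set (Tensor m n) :=
  {T | ∃ ab : Fin r → ℂ × ℂ, ∀ i, T i = ∑ k, ∏ j, vand n (ab k).1 (ab k).2 (i j)}

/-- The cp rank of a tensor. -/
def cpRank {m n : ℕ} (T : Tensor m n) : ℕ := sInf {r | T ∈ cpSet m n r}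

/-- The symmetric rank of a tensor. -/
def symRank {m n : ℕ} (T : Tensor m n) : ℕ := sInf {r | T ∈ symSet m n r}

/-- The Vandermonde rank of a tensor. -/
def vandRank {m n : ℕ} (T : Tensor m n) : ℕ := sInf {r | T ∈ vandSet m n r}

/-- The border rank of a tensor (closure in the product topology). -/
def brank {m n : ℕ} (T : Tensor m n) : ℕ := sInf {r | T ∈ closure (cpSet m n r)}

/-- The symmetric border rank of a tensor. -/
def bSymRank {m n : ℕ} (T : Tensor m n) : ℕ := sInf {r | T ∈ closure (symSet m n r)}

/-- The border Vandermonde rank of a tensor. -/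
def bVandRank {m n : ℕ} (T : Tensor m n) : ℕ := sInf {r | T ∈ closure (vandSet m n r)}

/-- `T` is the Hankel tensor with parameter vector `h ∈ ℂ^{(n-1)m+1}`. -/
def IsHankel {m n : ℕ} (T : Tensor m n) (h : Fin ((n - 1) * m + 1) → ℂ) : Prop :=
  ∀ i : Fin m → Fin n, T i = h ⟨∑ j, (i j : ℕ), by
    have h1 : ∑ j, (i j : ℕ) ≤ ∑ _j : Fin m, (n - 1) :=
      Finset.sum_le_sum fun j _ => Nat.le_pred_of_lt (i j).isLt
    simp only [Finset.sum_const, Finset.card_univ, Fintype.card_fin, smul_eq_mul] at h1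
    exact Nat.lt_succ_of_le (h1.trans (le_of_eq (Nat.mul_comm m (n - 1))))⟩

/-- The `(d-r+1) × (r+1)` Hankel (catalecticant) matrix `C_{d-r,r}(h)` of `h ∈ ℂ^{d+1}`. -/
def hMat (d r : ℕ) (h : Fin (d + 1) → ℂ) : Matrix (Fin (d - r + 1)) (Fin (r + 1)) ℂ :=
  Matrix.of fun i j => if hij : (i : ℕ) + (j : ℕ) < d + 1 then h ⟨(i : ℕ) + (j : ℕ), hij⟩ else 0

/-- The binary form `f(x,y) = f_0 x^r + f_1 x^(r-1) y + ⋯ + f_r y^r`. -/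
def binForm (r : ℕ) (f : Fin (r + 1) → ℂ) : MvPolynomial (Fin 2) ℂ :=
  ∑ j : Fin (r + 1), C (f j) * X 0 ^ (r - (j : ℕ)) * X 1 ^ (j : ℕ)

/-- The binary form `h(x,y) = ∑_j binom(d,j) h_j x^j y^(d-j)` associated with `h ∈ ℂ^{d+1}`. -/
def assocForm (d : ℕ) (h : Fin (d + 1) → ℂ) : MvPolynomial (Fin 2) ℂ :=
  ∑ j : Fin (d + 1), C ((d.choose (j : ℕ) : ℂ) * h j) * X 0 ^ (j : ℕ) * X 1 ^ (d - (j : ℕ))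

/-- Parameter vectors of binary forms of Waring rank at most `r`. -/
def waringSet (d r : ℕ) : Set (Fin (d + 1) → ℂ) :=
  {h | ∃ ab : Fin r → ℂ × ℂ,
    assocForm d h = ∑ i, (C (ab i).1 * X 0 + C (ab i).2 * X 1) ^ d}

/-- The Waring rank of the binary form associated with `h`. -/
def waringRank (d : ℕ) (h : Fin (d + 1) → ℂ) : ℕ := sInf {r | h ∈ waringSet d r}

/-- The border Waring rank of the binary form associated with `h`. -/
def bWaringRank (d : ℕ) (h : Fin (d + 1) → ℂ) : ℕ := sInf {r | h ∈ closure (waringSet d r)}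

/-! ### Lower bound: flattening ranks -/

lemma vandSet_subset_symSet (m n r : ℕ) : vandSet m n r ⊆ symSet m n r := by
  rintro T ⟨ab, hT⟩
  exact ⟨fun k => vand n (ab k).1 (ab k).2, hT⟩

lemma symSet_subset_cpSet (m n r : ℕ) : symSet m n r ⊆ cpSet m n r := by
  rintro T ⟨v, hT⟩
  exact ⟨fun k _ => v k, hT⟩

/-- Every `a ≤ m(n-1)` is the index sum of some multi-index. -/
lemma exists_index_sum_eq (n : ℕ) (hn : 1 ≤ n) (m a : ℕ) (ha : a ≤ (n - 1) * m) :
    ∃ i : Fin m → Fin n, ∑ j, (i j : ℕ) = a := by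
  induction m generalizing a with
  | zero => exact ⟨fun _ => ⟨0, hn⟩, by simp at ha; simp [ha]⟩
  | succ m ih =>
    obtain ⟨i, hi⟩ := ih (a - min a (n - 1)) (by rw [Nat.mul_succ] at ha; omega)
    refine ⟨Fin.cons ⟨min a (n - 1), by omega⟩ i, ?_⟩
    rw [Fin.sum_univ_succ]
    simp only [Fin.cons_zero, Fin.cons_succ, hi]
    omega

/-- Concatenation of two multi-indices of length `m₀`. -/
def joinIndex {n m₀ : ℕ} (a b : Fin m₀ → Fin n) : Fin (2 * m₀) → Fin n :=
  Fin.append a b ∘ Fin.cast (two_mul m₀)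

@[to_additive]
lemma prod_joinIndex {M : Type*} [CommMonoid M] {n m₀ : ℕ} (a b : Fin m₀ → Fin n)
    (g : Fin (2 * m₀) → Fin n → M) :
    ∏ j, g j (joinIndex a b j) =
      (∏ j, g (Fin.cast (two_mul m₀).symm (Fin.castAdd m₀ j)) (a j)) *
        ∏ j, g (Fin.cast (two_mul m₀).symm (Fin.natAdd m₀ j)) (b j) := by
  rw [← (finCongr (two_mul m₀).symm).prod_comp, Fin.prod_univ_add]
  simp [joinIndex, -Fin.natAdd_eq_addNat]

/-- A submatrix of the balanced flattening, as a linear map in the tensor. -/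
def flattening {n m₀ : ℕ} {α β : Type*} (a : α → Fin m₀ → Fin n) (b : β → Fin m₀ → Fin n) :
    Tensor (2 * m₀) n →ₗ[ℂ] Matrix α β ℂ where
  toFun T := Matrix.of fun x y => T (joinIndex (a x) (b y))
  map_add' _ _ := rfl
  map_smul' _ _ := rfl

lemma flattening_apply {n m₀ : ℕ} {α β : Type*} (a : α → Fin m₀ → Fin n)
    (b : β → Fin m₀ → Fin n) (T : Tensor (2 * m₀) n) (x : α) (y : β) :
    flattening a b T x y = T (joinIndex (a x) (b y)) :=
  rfl

lemma rank_flattening_le {n m₀ k : ℕ} {α β : Type*} [Fintype α] [Fintype β]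
    (a : α → Fin m₀ → Fin n) (b : β → Fin m₀ → Fin n) {T : Tensor (2 * m₀) n}
    (hT : T ∈ cpSet (2 * m₀) n k) : (flattening a b T).rank ≤ k := by
  obtain ⟨u, hu⟩ := hT
  have : flattening a b T =
      (Matrix.of fun x l => ∏ j, u l (Fin.cast (two_mul m₀).symm (Fin.castAdd m₀ j)) (a x j) :
        Matrix α (Fin k) ℂ) *
      (Matrix.of fun l y => ∏ j, u l (Fin.cast (two_mul m₀).symm (Fin.natAdd m₀ j)) (b y j) :
        Matrix (Fin k) β ℂ) := by
    ext x y
    simp only [flattening_apply, Matrix.of_apply, hu, Matrix.mul_apply]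
    exact Finset.sum_congr rfl fun l _ => prod_joinIndex (a x) (b y) (u l)
  rw [this]
  exact (Matrix.rank_mul_le_left _ _).trans <|
    (Matrix.rank_le_card_width _).trans_eq (Fintype.card_fin k)

/-- Matrices of rank at most `k` form a closed set. -/
lemma isClosed_setOf_rank_le {α β : Type*} [Fintype α] [Fintype β] (k : ℕ) :
    IsClosed {M : Matrix α β ℂ | M.rank ≤ k} := by
  classical
  let Φ : Matrix α β ℂ →ₗ[ℂ] ((β → ℂ) →L[ℂ] (α → ℂ)) :=
    (LinearMap.toContinuousLinearMap.toLinearMap).comp (Matrix.toLin').toLinearMap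
  have hΦ : Continuous Φ := Φ.continuous_of_finiteDimensional
  have hopen := (isOpen_setOfPred_nat_le_rank (𝕜 := ℂ) (E := β → ℂ) (F := α → ℂ) (k + 1)).preimage hΦ
  rw [← isOpen_compl_iff]
  convert hopen using 1
  ext M
  have : LinearMap.rank ((Φ M : (β → ℂ) →L[ℂ] (α → ℂ)) : (β → ℂ) →ₗ[ℂ] (α → ℂ)) =
      (M.rank : Cardinal) := by
    rw [LinearMap.rank, ← Module.finrank_eq_rank]
    rfl
  simp only [Set.mem_compl_iff, Set.mem_ofPred_eq, Set.mem_preimage, this, not_le]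
  norm_cast

lemma rank_flattening_le_of_mem_closure {n m₀ k : ℕ} {α β : Type*} [Fintype α] [Fintype β]
    (a : α → Fin m₀ → Fin n) (b : β → Fin m₀ → Fin n) {T : Tensor (2 * m₀) n}
    (hT : T ∈ closure (cpSet (2 * m₀) n k)) : (flattening a b T).rank ≤ k := by
  have hcont : Continuous (flattening a b : Tensor (2 * m₀) n →ₗ[ℂ] Matrix α β ℂ) :=
    LinearMap.continuous_of_finiteDimensional _
  exact closure_minimal (fun _ h => rank_flattening_le a b h)
    ((isClosed_setOf_rank_le k).preimage hcont) hT

lemma rank_hMat_le_of_mem_closure {n m₀ k : ℕ} (hn : 1 ≤ n) {H : Tensor (2 * m₀) n}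
    {h : Fin ((n - 1) * (2 * m₀) + 1) → ℂ} (hH : IsHankel H h)
    (hk : H ∈ closure (cpSet (2 * m₀) n k)) :
    (hMat ((n - 1) * (2 * m₀)) ((n - 1) * m₀) h).rank ≤ k := by
  have hd : (n - 1) * (2 * m₀) = (n - 1) * m₀ + (n - 1) * m₀ := by ring
  choose a ha using fun x : Fin ((n - 1) * (2 * m₀) - (n - 1) * m₀ + 1) =>
    exists_index_sum_eq n hn m₀ x (by omega)
  choose b hb using fun x : Fin ((n - 1) * m₀ + 1) =>
    exists_index_sum_eq n hn m₀ x (by omega)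
  have : hMat ((n - 1) * (2 * m₀)) ((n - 1) * m₀) h = flattening a b H := by
    ext x y
    have hs := sum_joinIndex (a x) (b y) (fun _ i => (i : ℕ))
    rw [ha, hb] at hs
    simp only [flattening_apply, hMat, Matrix.of_apply, hH _, hs]
    rw [dif_pos (by omega)]
  rw [this]
  exact rank_flattening_le_of_mem_closure a b hk

/-! ### Upper bound: Sylvester's decomposition -/

/-- The parameter vector extended by zero. -/
def extendZero {d : ℕ} (h : Fin (d + 1) → ℂ) (k : ℕ) : ℂ :=
  if hk : k < d + 1 then h ⟨k, hk⟩ else 0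

/-- The moment functional `X ^ i ↦ h i` on univariate polynomials. -/
def momentFunctional (h : ℕ → ℂ) : Polynomial ℂ →ₗ[ℂ] ℂ :=
  (Polynomial.basisMonomials ℂ).constr ℂ h

lemma momentFunctional_X_pow (h : ℕ → ℂ) (i : ℕ) :
    momentFunctional h (Polynomial.X ^ i) = h i := by
  simpa [momentFunctional, Polynomial.X_pow_eq_monomial] using
    (Polynomial.basisMonomials ℂ).constr_basis ℂ h i

lemma momentFunctional_mul_X_pow (h : ℕ → ℂ) {N : ℕ} {p : Polynomial ℂ} (hp : p.natDegree ≤ N)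
    (i : ℕ) : momentFunctional h (p * Polynomial.X ^ i) =
      ∑ j : Fin (N + 1), h (i + j) * p.coeff j := by
  conv_lhs => rw [p.as_sum_range_C_mul_X_pow' (Nat.lt_succ_of_le hp)]
  rw [Finset.sum_mul, map_sum, Finset.sum_range]
  refine Finset.sum_congr rfl fun j _ => ?_
  rw [mul_assoc, ← pow_add, ← Polynomial.smul_eq_C_mul, map_smul, momentFunctional_X_pow,
    smul_eq_mul, mul_comm, add_comm i]

lemma hMat_mulVec_coeff {d r : ℕ} (h : Fin (d + 1) → ℂ) {p : Polynomial ℂ}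
    (hp : p.natDegree ≤ r) (i : Fin (d - r + 1)) :
    (hMat d r h).mulVec (fun j => p.coeff j) i =
      momentFunctional (extendZero h) (p * Polynomial.X ^ (i : ℕ)) := by
  rw [momentFunctional_mul_X_pow _ hp]
  rfl

/-- The univariate polynomial with prescribed coefficients. -/
def coeffPoly {r : ℕ} (f : Fin (r + 1) → ℂ) : Polynomial ℂ :=
  ∑ j : Fin (r + 1), Polynomial.monomial (j : ℕ) (f j)

lemma coeffPoly_coeff {r : ℕ} (f : Fin (r + 1) → ℂ) (j : Fin (r + 1)) :
    (coeffPoly f).coeff j = f j := by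
  simp [coeffPoly, Polynomial.coeff_monomial, Fin.val_inj]

lemma natDegree_coeffPoly_le {r : ℕ} (f : Fin (r + 1) → ℂ) : (coeffPoly f).natDegree ≤ r :=
  Polynomial.natDegree_sum_le_of_forall_le _ _ fun j _ =>
    (Polynomial.natDegree_monomial_le _).trans (Nat.lt_succ_iff.mp j.2)

/-- The moment functional kills `f * g` as soon as it kills `f * X ^ i` for all `i` up to a bound
on the degree of `g`. -/
lemma momentFunctional_mul_eq_zero {h : ℕ → ℂ} {f g : Polynomial ℂ} {K : ℕ}
    (hf : ∀ i ≤ K, momentFunctional h (f * Polynomial.X ^ i) = 0) (hg : g.natDegree ≤ K) :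
    momentFunctional h (f * g) = 0 := by
  rw [g.as_sum_range_C_mul_X_pow' (Nat.lt_succ_of_le hg), Finset.mul_sum, map_sum]
  refine Finset.sum_eq_zero fun i hi => ?_
  rw [mul_left_comm, ← Polynomial.smul_eq_C_mul, map_smul,
    hf i (Nat.lt_succ_iff.mp (Finset.mem_range.mp hi)), smul_zero]

/-- A sequence annihilated by a polynomial with simple roots is a sum of geometric sequences. -/
lemma exists_sum_geometric {h : ℕ → ℂ} {f : Polynomial ℂ} {N k : ℕ} (hf0 : f ≠ 0)
    (hk : f.natDegree = k) (hroots : f.roots.Nodup)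
    (hf : ∀ i, i + k ≤ N → momentFunctional h (f * Polynomial.X ^ i) = 0) :
    ∃ c z : Fin k → ℂ, ∀ i ≤ N, h i = ∑ l, c l * z l ^ i := by
  classical
  have hcard : f.roots.toFinset.card = k := by
    rw [Multiset.toFinset_card_of_nodup hroots, IsAlgClosed.card_roots_eq_natDegree, hk]
  let e : Fin k ≃ f.roots.toFinset := (f.roots.toFinset.equivFinOfCardEq hcard).symm
  refine ⟨fun l => momentFunctional h (Lagrange.basis f.roots.toFinset id (e l)),
    fun l => e l, fun i hi => ?_⟩
  have hdiv := EuclideanDomain.div_add_mod (Polynomial.X ^ i : Polynomial ℂ) f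
  have hquot : momentFunctional h (f * (Polynomial.X ^ i / f)) = 0 := by
    by_cases hik : i < k
    · rw [(Polynomial.div_eq_zero_iff hf0).2]
      · simp
      · rw [Polynomial.degree_X_pow, Polynomial.degree_eq_natDegree hf0, hk]
        exact_mod_cast hik
    · refine momentFunctional_mul_eq_zero (K := N - k) (fun j hj => hf j (by omega)) ?_
      rw [← Nat.add_le_add_iff_left (n := k)]
      have hX : (Polynomial.X ^ i : Polynomial ℂ).degree = i := Polynomial.degree_X_pow i
      have hdeg := Polynomial.degree_add_div (p := Polynomial.X ^ i) hf0 (by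
        rw [hX, Polynomial.degree_eq_natDegree hf0, hk]
        exact_mod_cast not_lt.1 hik)
      have hq0 : (Polynomial.X ^ i / f) ≠ 0 := by
        intro h0
        simp [h0] at hdeg
      rw [hX, Polynomial.degree_eq_natDegree hf0, Polynomial.degree_eq_natDegree hq0, hk] at hdeg
      have : k + (Polynomial.X ^ i / f).natDegree = i := by exact_mod_cast hdeg
      omega
  have hrem : (Polynomial.X ^ i % f) = Lagrange.interpolate f.roots.toFinset id
      (fun z : ℂ => z ^ i) := by
    refine Lagrange.eq_interpolate_of_eval_eq _ Function.injective_id.injOn ?_ fun z hz => ?_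
    · rw [hcard, ← hk, ← Polynomial.degree_eq_natDegree hf0]
      exact EuclideanDomain.mod_lt _ hf0
    · have hz' : f.eval z = 0 := (Polynomial.mem_roots'.1 (Multiset.mem_toFinset.1 hz)).2
      have := congrArg (Polynomial.eval z) hdiv
      simpa [hz'] using this
  rw [← momentFunctional_X_pow h i, ← hdiv, map_add, hquot, zero_add, hrem,
    Lagrange.interpolate_apply, map_sum, ← Finset.sum_coe_sort, ← e.sum_comp]
  refine Finset.sum_congr rfl fun l _ => ?_
  rw [← Polynomial.smul_eq_C_mul, map_smul, smul_eq_mul, mul_comm]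

lemma prod_vand {m n : ℕ} (a b : ℂ) (i : Fin m → Fin n) :
    ∏ j, vand n a b (i j) = a ^ ((n - 1) * m - ∑ j, (i j : ℕ)) * b ^ ∑ j, (i j : ℕ) := by
  simp only [vand, Finset.prod_mul_distrib, Finset.prod_pow_eq_pow_sum]
  congr 2
  have : ∑ j, (n - 1 - (i j : ℕ)) + ∑ j, (i j : ℕ) = (n - 1) * m := by
    rw [← Finset.sum_add_distrib, Finset.sum_congr rfl fun j _ =>
      (Nat.sub_add_cancel (Nat.le_pred_of_lt (i j).isLt) : n - 1 - (i j : ℕ) + i j = n - 1)]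
    simp [mul_comm]
  omega

lemma isHankel_apply {m n : ℕ} {H : Tensor m n} {h : Fin ((n - 1) * m + 1) → ℂ}
    (hH : IsHankel H h) (i : Fin m → Fin n) :
    ∑ j, (i j : ℕ) ≤ (n - 1) * m ∧ H i = extendZero h (∑ j, (i j : ℕ)) := by
  have hle : ∑ j, (i j : ℕ) ≤ (n - 1) * m := by
    calc ∑ j, (i j : ℕ) ≤ ∑ _j : Fin m, (n - 1) :=
          Finset.sum_le_sum fun j _ => Nat.le_pred_of_lt (i j).isLt
      _ = (n - 1) * m := by simp [mul_comm]
  refine ⟨hle, ?_⟩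
  rw [hH i, extendZero, dif_pos (Nat.lt_succ_of_le hle)]

lemma mem_vandSet_of_sum {m n r : ℕ} {H : Tensor m n} {h : Fin ((n - 1) * m + 1) → ℂ}
    (hH : IsHankel H h) (ab : Fin r → ℂ × ℂ)
    (hab : ∀ i ≤ (n - 1) * m,
      extendZero h i = ∑ k, (ab k).1 ^ ((n - 1) * m - i) * (ab k).2 ^ i) :
    H ∈ vandSet m n r := by
  refine ⟨ab, fun i => ?_⟩
  obtain ⟨hle, hi⟩ := isHankel_apply hH i
  rw [hi, hab _ hle]
  exact Finset.sum_congr rfl fun k _ => (prod_vand _ _ i).symm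

lemma mul_pow_eq_of_pow_eq {d i : ℕ} (hi : i ≤ d) {w c : ℂ} (hw : w ^ d = c) (z : ℂ) :
    w ^ (d - i) * (w * z) ^ i = c * z ^ i := by
  rw [mul_pow, ← mul_assoc, ← pow_add, Nat.sub_add_cancel hi, hw]

/-- Sylvester: all roots finite. -/
lemma mem_vandSet_of_natDegree_eq {m n r : ℕ} (hd : 0 < (n - 1) * m) {H : Tensor m n}
    {h : Fin ((n - 1) * m + 1) → ℂ} (hH : IsHankel H h) {f : Polynomial ℂ} (hf0 : f ≠ 0)
    (hk : f.natDegree = r) (hroots : f.roots.Nodup)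
    (hf : ∀ i, i + r ≤ (n - 1) * m →
      momentFunctional (extendZero h) (f * Polynomial.X ^ i) = 0) :
    H ∈ vandSet m n r := by
  obtain ⟨c, z, hcz⟩ := exists_sum_geometric hf0 hk hroots hf
  choose w hw using fun l => IsAlgClosed.exists_pow_nat_eq (c l) hd
  refine mem_vandSet_of_sum hH (fun l => (w l, w l * z l)) fun i hi => ?_
  rw [hcz i hi]
  exact Finset.sum_congr rfl fun l _ => (mul_pow_eq_of_pow_eq hi (hw l) (z l)).symm

/-- Sylvester: one root at infinity. -/
lemma mem_vandSet_of_natDegree_succ_eq {m n k : ℕ} (hd : 0 < (n - 1) * m) {H : Tensor m n}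
    {h : Fin ((n - 1) * m + 1) → ℂ} (hH : IsHankel H h) {f : Polynomial ℂ} (hf0 : f ≠ 0)
    (hk : f.natDegree = k) (hroots : f.roots.Nodup)
    (hf : ∀ i, i + (k + 1) ≤ (n - 1) * m →
      momentFunctional (extendZero h) (f * Polynomial.X ^ i) = 0) :
    H ∈ vandSet m n (k + 1) := by
  obtain ⟨c, z, hcz⟩ := exists_sum_geometric (N := (n - 1) * m - 1) hf0 hk hroots
    fun i hi => hf i (by omega)
  choose w hw using fun l => IsAlgClosed.exists_pow_nat_eq (c l) hd
  obtain ⟨w₀, hw₀⟩ := IsAlgClosed.exists_pow_nat_eq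
    (extendZero h ((n - 1) * m) - ∑ l, c l * z l ^ ((n - 1) * m)) hd
  refine mem_vandSet_of_sum hH (Fin.cons (0, w₀) fun l => (w l, w l * z l)) fun i hi => ?_
  rw [Fin.sum_univ_succ]
  simp only [Fin.cons_zero, Fin.cons_succ]
  rw [Finset.sum_congr rfl fun l _ => mul_pow_eq_of_pow_eq hi (hw l) (z l)]
  rcases hi.lt_or_eq with hlt | rfl
  · rw [zero_pow (by omega), zero_mul, zero_add, hcz i (by omega)]
  · rw [hw₀]
    simp

/-! ### Squarefree binary forms -/

lemma binForm_eq_rename_homogenize {r : ℕ} (f : Fin (r + 1) → ℂ) :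
    binForm r f = rename (Equiv.swap (0 : Fin 2) 1) ((coeffPoly f).homogenize r) := by
  rw [coeffPoly, Polynomial.homogenize_finsetSum, map_sum, binForm]
  refine Finset.sum_congr rfl fun j _ => ?_
  rw [← Polynomial.C_mul_X_pow_eq_monomial, Polynomial.homogenize_C_mul,
    Polynomial.homogenize_X_pow (Nat.lt_succ_iff.mp j.2)]
  simp only [map_mul, map_pow, rename_C, rename_X, Equiv.swap_apply_left, Equiv.swap_apply_right]
  ring

/-- A multivariate polynomial vanishing somewhere is not a unit. -/
lemma not_isUnit_of_eval_eq_zero {σ : Type*} {p : MvPolynomial σ ℂ} (x : σ → ℂ)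
    (hx : eval x p = 0) : ¬ IsUnit p := fun h => by
  simpa [hx] using h.map (eval x)

lemma nodup_roots_of_squarefree_binForm {r : ℕ} {f : Fin (r + 1) → ℂ}
    (hf : coeffPoly f ≠ 0) (hsq : Squarefree (binForm r f)) : (coeffPoly f).roots.Nodup := by
  rw [Multiset.nodup_iff_count_le_one]
  intro z
  by_contra! hz
  rw [Polynomial.count_roots] at hz
  have hdvd : (Polynomial.X - Polynomial.C z) ^ 2 ∣ coeffPoly f :=
    (Polynomial.le_rootMultiplicity_iff hf).1 hz
  obtain ⟨g, hg⟩ := hdvd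
  have hg0 : g ≠ 0 := by rintro rfl; simp [hg] at hf
  have hdeg : (coeffPoly f).natDegree = 2 + g.natDegree := by
    rw [hg, Polynomial.natDegree_mul (pow_ne_zero _ (Polynomial.X_sub_C_ne_zero z)) hg0,
      Polynomial.natDegree_pow, Polynomial.natDegree_X_sub_C]
  have hle := natDegree_coeffPoly_le f
  have hX : (Polynomial.X - Polynomial.C z).natDegree ≤ 1 := (Polynomial.natDegree_X_sub_C z).le
  have hfac : (coeffPoly f).homogenize r =
      (Polynomial.X - Polynomial.C z).homogenize 1 * (Polynomial.X - Polynomial.C z).homogenize 1 *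
        g.homogenize (r - 2) := by
    obtain ⟨t, rfl⟩ : ∃ t, r = 1 + 1 + t := ⟨r - 2, by omega⟩
    rw [← Polynomial.homogenize_mul _ _ hX hX, show 1 + 1 + t - 2 = t by omega,
      ← Polynomial.homogenize_mul _ _ (Polynomial.natDegree_mul_le_of_le hX hX) (by omega),
      ← pow_two, ← hg]
  have hunit := hsq (rename (Equiv.swap (0 : Fin 2) 1)
    ((Polynomial.X - Polynomial.C z).homogenize 1)) (by
      rw [binForm_eq_rename_homogenize, hfac, map_mul, map_mul]
      exact dvd_mul_right _ _)
  refine not_isUnit_of_eval_eq_zero 0 ?_ hunit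
  simp [Polynomial.homogenize_sub, Polynomial.homogenize_X, Polynomial.homogenize_C]

lemma le_natDegree_of_squarefree_binForm {r : ℕ} {f : Fin (r + 1) → ℂ}
    (hsq : Squarefree (binForm r f)) :
    r ≤ (coeffPoly f).natDegree + 1 := by
  by_contra! hlt
  refine not_isUnit_of_eval_eq_zero (p := (X 0 : MvPolynomial (Fin 2) ℂ)) 0 (by simp)
    (hsq (X 0) ?_)
  refine Finset.dvd_sum fun j _ => ?_
  by_cases hj : (j : ℕ) + 2 ≤ r
  · rw [← pow_two]
    exact ((pow_dvd_pow _ (by omega)).mul_left _).mul_right _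
  · rw [← coeffPoly_coeff f j, Polynomial.coeff_eq_zero_of_natDegree_lt (by omega)]
    simp

/-! ### Nondegenerate catalecticants -/

/-- In a pencil `p + t q` without base points, `deg q < deg p`, some member has only simple
roots. -/
lemma exists_nodup_roots_add_smul {p q : Polynomial ℂ} (hp : 0 < p.natDegree)
    (hpq : ∀ z, p.eval z = 0 → q.eval z ≠ 0) (hdeg : q.natDegree < p.natDegree) :
    ∃ t : ℂ, (p + Polynomial.C t * q).roots.Nodup := by
  classical
  have hcop : IsCoprime p q := by
    refine (Polynomial.isCoprime_iff_aeval_ne_zero_of_isAlgClosed ℂ ℂ p q).2 fun z => ?_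
    by_cases hz : p.eval z = 0
    · exact Or.inr (by simpa using hpq z hz)
    · exact Or.inl (by simpa using hz)
  set W := p * q.derivative - p.derivative * q with hW
  have hW0 : W ≠ 0 := by
    intro h0
    have hdvd : p ∣ p.derivative * q := ⟨q.derivative, (sub_eq_zero.1 h0).symm⟩
    have hdvd' : p ∣ p.derivative := hcop.dvd_of_dvd_mul_right hdvd
    have hlt := Polynomial.natDegree_derivative_lt hp.ne'
    have hz := Polynomial.eq_zero_of_dvd_of_natDegree_lt hdvd' hlt
    exact hp.ne' (Polynomial.derivative_eq_zero.1 hz)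
  obtain ⟨t, ht⟩ := Infinite.exists_notMem_finset
    (W.roots.toFinset.image fun z => -p.eval z / q.eval z)
  refine ⟨t, ?_⟩
  have hne : p + Polynomial.C t * q ≠ 0 := by
    intro h0
    have := Polynomial.natDegree_add_eq_left_of_natDegree_lt
      ((Polynomial.natDegree_C_mul_le t q).trans_lt hdeg)
    rw [h0, Polynomial.natDegree_zero] at this
    omega
  rw [Multiset.nodup_iff_count_le_one]
  intro z
  by_contra! hz
  rw [Polynomial.count_roots, Polynomial.one_lt_rootMultiplicity_iff_isRoot hne] at hz
  obtain ⟨h1, h2⟩ := hz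
  simp only [Polynomial.IsRoot.def, Polynomial.eval_add, Polynomial.eval_mul, Polynomial.eval_C,
    Polynomial.derivative_add, Polynomial.derivative_C_mul] at h1 h2
  have hqz : q.eval z ≠ 0 := fun hqz => hpq z (by simpa [hqz] using h1) hqz
  refine ht (Finset.mem_image.2 ⟨z, ?_, ?_⟩)
  · rw [Multiset.mem_toFinset, Polynomial.mem_roots hW0, Polynomial.IsRoot.def, hW]
    simp only [Polynomial.eval_sub, Polynomial.eval_mul]
    linear_combination q.derivative.eval z * h1 - q.eval z * h2
  · field_simp
    linear_combination -h1

/-- If the moment functional is nondegenerate on polynomials of degree at most `s`, then it kills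
`f * X ^ i`, `i < s`, for some `f` of degree `s + 1` with simple roots. -/
lemma exists_apolar_nodup_roots {h : ℕ → ℂ} {s : ℕ}
    (hinj : ∀ g : Polynomial ℂ, g.natDegree ≤ s →
      (∀ i ≤ s, momentFunctional h (g * Polynomial.X ^ i) = 0) → g = 0)
    (hsurj : ∀ y : ℕ → ℂ, ∃ g : Polynomial ℂ, g.natDegree ≤ s ∧
      ∀ i ≤ s, momentFunctional h (g * Polynomial.X ^ i) = y i) :
    ∃ f : Polynomial ℂ, f.natDegree = s + 1 ∧ f.roots.Nodup ∧
      ∀ i < s, momentFunctional h (f * Polynomial.X ^ i) = 0 := by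
  obtain ⟨q, hqdeg, hq⟩ := hsurj fun i => if i = s then 1 else 0
  obtain ⟨p₀, hp₀deg, hp₀⟩ := hsurj fun i =>
    momentFunctional h (Polynomial.X ^ (s + 1) * Polynomial.X ^ i)
  set p := Polynomial.X ^ (s + 1) - p₀ with hpdef
  have hpdeg : p.natDegree = s + 1 := by
    rw [hpdef, Polynomial.natDegree_sub_eq_left_of_natDegree_lt, Polynomial.natDegree_X_pow]
    rw [Polynomial.natDegree_X_pow]
    omega
  have hp : ∀ i < s, momentFunctional h (p * Polynomial.X ^ i) = 0 := fun i hi => by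
    rw [hpdef, sub_mul, map_sub, hp₀ i hi.le, sub_self]
  have hq' : ∀ i < s, momentFunctional h (q * Polynomial.X ^ i) = 0 := fun i hi => by
    rw [hq i hi.le, if_neg hi.ne]
  have hq0 : q ≠ 0 := by
    rintro rfl
    simpa using hq s le_rfl
  have hker : ∀ (z : ℂ) (g : Polynomial ℂ), g.natDegree ≤ s → momentFunctional h g = 0 →
      (∀ i < s, momentFunctional h ((Polynomial.X - Polynomial.C z) * g * Polynomial.X ^ i) = 0) →
      g = 0 := by
    intro z g hg hg0 hgi
    refine hinj g hg fun i => ?_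
    induction i with
    | zero => intro _; simpa using hg0
    | succ i ih =>
      intro hi
      have h1 := hgi i (by omega)
      have h2 : (Polynomial.X - Polynomial.C z) * g * Polynomial.X ^ i =
          g * Polynomial.X ^ (i + 1) - z • (g * Polynomial.X ^ i) := by
        rw [Polynomial.smul_eq_C_mul]
        ring
      rw [h2, map_sub, map_smul, ih (by omega), smul_zero, sub_zero] at h1
      exact h1
  have hbase : ∀ z, p.eval z = 0 → q.eval z ≠ 0 := by
    intro z hpz hqz
    obtain ⟨p₁, hp₁⟩ := Polynomial.dvd_iff_isRoot.2 hpz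
    obtain ⟨q₁, hq₁⟩ := Polynomial.dvd_iff_isRoot.2 hqz
    have hp₁0 : p₁ ≠ 0 := by rintro rfl; simp [hp₁] at hpdeg
    have hq₁0 : q₁ ≠ 0 := by rintro rfl; simp [hq₁] at hq0
    have hXz := Polynomial.X_sub_C_ne_zero z
    have hp₁deg : p₁.natDegree = s := by
      rw [hp₁, Polynomial.natDegree_mul hXz hp₁0, Polynomial.natDegree_X_sub_C] at hpdeg
      omega
    have hq₁deg : q₁.natDegree < s := by
      rw [hq₁, Polynomial.natDegree_mul hXz hq₁0, Polynomial.natDegree_X_sub_C] at hqdeg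
      omega
    have hLq : momentFunctional h q₁ ≠ 0 := fun h0 =>
      hq₁0 (hker z q₁ hq₁deg.le h0 (by rwa [← hq₁]))
    set c := momentFunctional h p₁ / momentFunctional h q₁ with hc
    have hdeg : (p₁ - c • q₁).natDegree = s := by
      rw [Polynomial.natDegree_sub_eq_left_of_natDegree_lt, hp₁deg]
      rw [hp₁deg]
      exact (Polynomial.natDegree_smul_le c q₁).trans_lt hq₁deg
    have hzero : p₁ - c • q₁ = 0 := by
      refine hker z _ hdeg.le ?_ fun i hi => ?_
      · rw [map_sub, map_smul, smul_eq_mul, hc, div_mul_cancel₀ _ hLq, sub_self]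
      · have : (Polynomial.X - Polynomial.C z) * (p₁ - c • q₁) * Polynomial.X ^ i =
            p * Polynomial.X ^ i - c • (q * Polynomial.X ^ i) := by
          rw [hp₁, hq₁, Polynomial.smul_eq_C_mul, Polynomial.smul_eq_C_mul]
          ring
        rw [this, map_sub, map_smul, hp i hi, hq' i hi, smul_zero, sub_zero]
    rw [hzero, Polynomial.natDegree_zero] at hdeg
    omega
  obtain ⟨t, ht⟩ := exists_nodup_roots_add_smul (by omega) hbase (by omega)
  refine ⟨p + Polynomial.C t * q, ?_, ht, fun i hi => ?_⟩
  · rw [Polynomial.natDegree_add_eq_left_of_natDegree_lt, hpdeg]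
    exact (Polynomial.natDegree_C_mul_le t q).trans_lt (by omega)
  · rw [add_mul, mul_assoc, ← Polynomial.smul_eq_C_mul, map_add, map_smul, hp i hi, hq' i hi,
      smul_zero, add_zero]

lemma mem_vandSet_of_full_rank {m n s : ℕ} (hds : (n - 1) * m = 2 * s) (hs : 0 < s)
    {H : Tensor m n} {h : Fin ((n - 1) * m + 1) → ℂ} (hH : IsHankel H h)
    (hr : (hMat ((n - 1) * m) s h).rank = s + 1) : H ∈ vandSet m n (s + 1) := by
  have hdim : (n - 1) * m - s = s := by omega
  have hfin : Module.finrank ℂ (LinearMap.range (hMat ((n - 1) * m) s h).mulVecLin) = s + 1 := hr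
  have hinj : Function.Injective (hMat ((n - 1) * m) s h).mulVecLin := by
    rw [← LinearMap.ker_eq_bot, ← Submodule.finrank_eq_zero (R := ℂ)]
    have := (hMat ((n - 1) * m) s h).mulVecLin.finrank_range_add_finrank_ker
    rw [hfin, Module.finrank_fin_fun] at this
    omega
  have hsurj : Function.Surjective (hMat ((n - 1) * m) s h).mulVecLin := by
    rw [← LinearMap.range_eq_top]
    refine Submodule.eq_top_of_finrank_eq ?_
    rw [hfin, Module.finrank_fin_fun, hdim]
  have hnondeg : ∀ g : Polynomial ℂ, g.natDegree ≤ s →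
      (∀ i ≤ s, momentFunctional (extendZero h) (g * Polynomial.X ^ i) = 0) → g = 0 := by
    intro g hg hgi
    have hzero : (fun j : Fin (s + 1) => g.coeff j) = 0 := by
      refine hinj (funext fun i => ?_)
      rw [map_zero, Matrix.mulVecLin_apply, hMat_mulVec_coeff h hg, hgi i (by omega)]
      rfl
    ext j
    by_cases hj : j < s + 1
    · exact congrFun hzero ⟨j, hj⟩
    · rw [Polynomial.coeff_eq_zero_of_natDegree_lt (by omega), Polynomial.coeff_zero]
  have hsolve : ∀ y : ℕ → ℂ, ∃ g : Polynomial ℂ, g.natDegree ≤ s ∧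
      ∀ i ≤ s, momentFunctional (extendZero h) (g * Polynomial.X ^ i) = y i := by
    intro y
    obtain ⟨g, hg⟩ := hsurj fun i => y i
    refine ⟨coeffPoly g, natDegree_coeffPoly_le g, fun i hi => ?_⟩
    have hgi := congrFun hg ⟨i, by omega⟩
    rwa [Matrix.mulVecLin_apply, ← funext (coeffPoly_coeff g),
      hMat_mulVec_coeff h (natDegree_coeffPoly_le g)] at hgi
  obtain ⟨f, hdeg, hroots, hf⟩ := exists_apolar_nodup_roots hnondeg hsolve
  refine mem_vandSet_of_natDegree_eq (by omega) hH ?_ hdeg hroots fun i hi => hf i (by omega)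
  rintro rfl
  simp at hdeg

lemma mem_vandSet_of_squarefree {m n r : ℕ} (hd : 0 < (n - 1) * m) (hrd : r ≤ (n - 1) * m)
    {H : Tensor m n} {h : Fin ((n - 1) * m + 1) → ℂ} (hH : IsHankel H h)
    {f : Fin (r + 1) → ℂ} (hf0 : f ≠ 0) (hf : (hMat ((n - 1) * m) r h).mulVec f = 0)
    (hsq : Squarefree (binForm r f)) : H ∈ vandSet m n r := by
  have hP0 : coeffPoly f ≠ 0 := by
    intro h0
    refine hf0 (funext fun j => ?_)
    rw [← coeffPoly_coeff f j, h0]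
    simp
  have hle := natDegree_coeffPoly_le f
  have hker : ∀ i, i + r ≤ (n - 1) * m →
      momentFunctional (extendZero h) (coeffPoly f * Polynomial.X ^ i) = 0 := by
    intro i hi
    have hfi := congrFun hf ⟨i, by omega⟩
    rwa [← funext (coeffPoly_coeff f), hMat_mulVec_coeff h hle] at hfi
  have hroots := nodup_roots_of_squarefree_binForm hP0 hsq
  have hge := le_natDegree_of_squarefree_binForm hsq
  rcases hle.eq_or_lt with heq | hlt
  · exact mem_vandSet_of_natDegree_eq hd hH hP0 heq hroots hker
  · obtain ⟨k, rfl⟩ : ∃ k, r = k + 1 := ⟨r - 1, by omega⟩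
    exact mem_vandSet_of_natDegree_succ_eq hd hH hP0 (by omega) hroots hker

/-- Even order: if `r = s+1` or the kernel form is squarefree, then
all six ranks of the Hankel tensor equal `r`. -/
theorem stmt_8 (n m₀ : ℕ) (hn : 2 ≤ n) (hm : 1 ≤ m₀)
    (H : Tensor (2 * m₀) n) (h : Fin ((n - 1) * (2 * m₀) + 1) → ℂ) (hH : IsHankel H h)
    (r : ℕ) (hr : r = (hMat ((n - 1) * (2 * m₀)) ((n - 1) * m₀) h).rank)
    (hyp : r = (n - 1) * m₀ + 1 ∨
      (r < (n - 1) * m₀ + 1 ∧ ∃ f : Fin (r + 1) → ℂ, f ≠ 0 ∧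
        (hMat ((n - 1) * (2 * m₀)) r h).mulVec f = 0 ∧ Squarefree (binForm r f))) :
    vandRank H = r ∧ symRank H = r ∧ cpRank H = r ∧
      bVandRank H = r ∧ bSymRank H = r ∧ brank H = r := by
  have hs : 0 < (n - 1) * m₀ := Nat.mul_pos (by omega) hm
  have hd : (n - 1) * (2 * m₀) = 2 * ((n - 1) * m₀) := by ring
  have hmem : H ∈ vandSet (2 * m₀) n r := by
    rcases hyp with hfull | ⟨hlt, f, hf0, hf, hsq⟩
    · rw [hfull]
      exact mem_vandSet_of_full_rank hd hs hH (hr.symm.trans hfull)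
    · exact mem_vandSet_of_squarefree (by omega) (by omega) hH hf0 hf hsq
  have hsym := vandSet_subset_symSet _ _ _ hmem
  have hcp := symSet_subset_cpSet _ _ _ hsym
  have hlow : ∀ k, H ∈ closure (cpSet (2 * m₀) n k) → r ≤ k := fun k hk =>
    hr.trans_le (rank_hMat_le_of_mem_closure (by omega) hH hk)
  have hlowSym : ∀ k, H ∈ closure (symSet (2 * m₀) n k) → r ≤ k := fun k hk =>
    hlow k (closure_mono (symSet_subset_cpSet _ _ _) hk)
  have hlowVand : ∀ k, H ∈ closure (vandSet (2 * m₀) n k) → r ≤ k := fun k hk =>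
    hlowSym k (closure_mono (vandSet_subset_symSet _ _ _) hk)
  have hInf : ∀ S : ℕ → Set (Tensor (2 * m₀) n), H ∈ S r → (∀ k, H ∈ S k → r ≤ k) →
      sInf {k | H ∈ S k} = r := fun S hr' hS =>
    IsLeast.csInf_eq ⟨hr', fun k hk => hS k hk⟩
  exact ⟨hInf _ hmem fun k hk => hlowVand k (subset_closure hk),
    hInf _ hsym fun k hk => hlowSym k (subset_closure hk),
    hInf _ hcp fun k hk => hlow k (subset_closure hk),
    hInf (fun k => closure (vandSet (2 * m₀) n k)) (subset_closure hmem) hlowVand,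
    hInf (fun k => closure (symSet (2 * m₀) n k)) (subset_closure hsym) hlowSym,
    hInf (fun k => closure (cpSet (2 * m₀) n k)) (subset_closure hcp) hlow⟩
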